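/- Let α > 1 with α ∉ ℚ ∪ ℚ₂, let B ⊂ ℍ be nonempty with B̂ = B \ {x ∈ ℍ : x₂ ≤ |x₁|^{1/α}} finite, and define h₀ = max_{x ∈ B̂} x₂ if B̂ ≠ ∅, and h₀ = min{h ≥ 0 : B ∩ ([−⌈h^α⌉, ⌈h^α⌉] × [0,h]) ≠ ∅} if B̂ = ∅. Let l_{h₀} = [−⌊h₀^α⌋, ⌊h₀^α⌋] × {h₀}. Then there exists a constant c > 0 such that for all sufficiently large N, H_{B ∪ l_{h₀}, N}(l_{h₀}) = Σ_{w ∈ l_{h₀}} H_{B ∪ l_{h₀}, N}(w) ≥ c. -/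

import Mathlib

open Filter

namespace SHM

/-- The upper half planar lattice `ℍ = {(x₁,x₂) ∈ ℤ² : x₂ ≥ 0}` (including the x-axis). -/
def upperH : Set (ℤ × ℤ) := {p | 0 ≤ p.2}

/-- The horizontal line `L_n = {(x,n) : x ∈ ℤ}` of height `n`. -/
def lineH (n : ℤ) : Set (ℤ × ℤ) := {p | p.2 = n}

/-- The four unit steps of the planar simple random walk. -/
def dirs : Finset (ℤ × ℤ) := {(1,0), (-1,0), (0,1), (0,-1)}

/-- The position after `m` steps of the walk started at `z` whose first `n`
increments are given by `σ`. -/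
def pos (z : ℤ × ℤ) {n : ℕ} (σ : Fin n → ℤ × ℤ) (m : ℕ) : ℤ × ℤ :=
  z + ∑ i ∈ Finset.univ.filter (fun i : Fin n => (i : ℕ) < m), σ i

/-- The probability that the first `n` increments of the simple random walk
(each uniform on the four unit vectors) satisfy the predicate `E`. -/
noncomputable def stepProb (n : ℕ) (E : (Fin n → ℤ × ℤ) → Prop) : ℝ :=
  (Nat.card {σ : Fin n → ↥dirs // E fun i => ((σ i : ℤ × ℤ))} : ℝ) / 4 ^ n

/-- `P_z(S_{τ̄_A} = x)` : the walk started at `z` hits `A` (in finite time) for the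
first time precisely at the point `x`.  Here `τ̄_A = min {m ≥ 0 : S_m ∈ A}`. -/
noncomputable def hitProb (z : ℤ × ℤ) (A : Set (ℤ × ℤ)) (x : ℤ × ℤ) : ℝ :=
  ∑' n : ℕ, stepProb n fun σ =>
    pos z σ n = x ∧ x ∈ A ∧ ∀ m < n, pos z σ m ∉ A

/-- `P_z(τ̄_A < τ̄_B)` : the walk started at `z` hits `A` strictly before hitting `B`. -/
noncomputable def hitBeforeProb (z : ℤ × ℤ) (A B : Set (ℤ × ℤ)) : ℝ :=
  ∑' n : ℕ, stepProb n fun σ =>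
    pos z σ n ∈ A ∧ pos z σ n ∉ B ∧ ∀ m < n, pos z σ m ∉ A ∧ pos z σ m ∉ B

/-- The stationary harmonic measure `H_{B,N}(x) = Σ_{z ∈ L_N \ B} P_z(S_{τ̄_{B ∪ L₀}} = x)`. -/
noncomputable def harm (B : Set (ℤ × ℤ)) (N : ℕ) (x : ℤ × ℤ) : ℝ :=
  ∑' z : ↥(lineH (N : ℤ) \ B), hitProb (z : ℤ × ℤ) (B ∪ lineH 0) x

/-- `ℚ₁ = {log n₁ / log n₂ : n₁, n₂ ∈ ℤ, n₁, n₂ ≥ 2}`. -/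
def Q1 : Set ℝ := {r | ∃ n₁ n₂ : ℤ, 2 ≤ n₁ ∧ 2 ≤ n₂ ∧ r = Real.log n₁ / Real.log n₂}

/-- `ℚ₂ = {(b − dx)/(cx − a) ∈ ℝ : x ∈ ℚ₁, a, b, c, d ∈ ℤ}`. -/
def Q2 : Set ℝ :=
  {r | ∃ x ∈ Q1, ∃ a b c d : ℤ, (c : ℝ) * x - a ≠ 0 ∧ r = ((b : ℝ) - d * x) / ((c : ℝ) * x - a)}

/-- `B̂ = B \ {x ∈ ℍ : x₂ ≤ |x₁|^{1/α}}`. -/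
def Bhat (α : ℝ) (B : Set (ℤ × ℤ)) : Set (ℤ × ℤ) :=
  B \ {x ∈ upperH | (x.2 : ℝ) ≤ |(x.1 : ℝ)| ^ (1 / α)}

/-- The horizontal segment `l_h = [−⌊h^α⌋, ⌊h^α⌋] × {h}`. -/
def segL (α : ℝ) (h : ℤ) : Set (ℤ × ℤ) := {x | |x.1| ≤ ⌊(h : ℝ) ^ α⌋ ∧ x.2 = h}

/-!
Only a lower bound for the single point `(0, h₀)` is needed. Start one walk from every point of
`L_N` and first stop them on a line `L_H` well above `h₀`, ignoring `A = B ∪ l_{h₀}`: translation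
invariance sweeps counting measure on `L_N` onto counting measure on `L_H`, so `(0, H)` receives
mass `1`. Above `L_H` the set `A` lies under the graph of `|x| ^ β` with `β = 1 / α < 1`, where the
hitting probability of `(0, H)` is of order at most `y / x ^ 2 ≤ |x| ^ (β - 2)`. This bound is
summable, so for large `H` it is dominated on `A` by the harmonic extension of a density `q` on
`L_H` of total mass at most `1 / 2`. The same sweeping argument then shows that obstruction by `A`
costs at most half of the mass. From `(0, H)` the walk goes straight down to `(0, h₀)`, at a cost
of `4 ^ (h₀ - H)`.
-/

open scoped ENNReal

/-- The one-step transition operator of the simple random walk, `z ↦ E_z[g(S₁)]`. -/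
noncomputable def stepAvg (g : ℤ × ℤ → ℝ≥0∞) (z : ℤ × ℤ) : ℝ≥0∞ :=
  (∑ d ∈ dirs, g (z + d)) / 4

/-- The part `E_z[b(S_n); τ̄_A = n]` of `hitValue A b z` contributed by time `n`, defined through
the first step of the walk. -/
noncomputable def hitValueAt (A : Set (ℤ × ℤ)) (b : ℤ × ℤ → ℝ≥0∞) : ℕ → ℤ × ℤ → ℝ≥0∞
  | 0 => A.indicator b
  | n + 1 => Aᶜ.indicator (stepAvg (hitValueAt A b n))

/-- The expected boundary value `E_z[b(S_{τ̄_A}); τ̄_A < ∞]` collected when the walk hits `A`, i.e.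
the minimal nonnegative solution of the Dirichlet problem off `A` with data `b` on `A`. -/
noncomputable def hitValue (A : Set (ℤ × ℤ)) (b : ℤ × ℤ → ℝ≥0∞) (z : ℤ × ℤ) : ℝ≥0∞ :=
  ∑' n, hitValueAt A b n z

/-- The `ℝ≥0∞`-valued version of `hitProb z A x`, see `hitProb_eq_toReal_ehitProb`. -/
noncomputable def ehitProb (A : Set (ℤ × ℤ)) (x z : ℤ × ℤ) : ℝ≥0∞ :=
  hitValue A (Pi.single x 1) z

lemma sum_dirs {M : Type*} [AddCommMonoid M] (f : ℤ × ℤ → M) :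
    ∑ d ∈ dirs, f d = f (1, 0) + (f (-1, 0) + (f (0, 1) + f (0, -1))) := by
  simp [dirs]

section StepAvg

variable {f g : ℤ × ℤ → ℝ≥0∞} {z : ℤ × ℤ}

lemma stepAvg_mono (h : ∀ d ∈ dirs, f (z + d) ≤ g (z + d)) : stepAvg f z ≤ stepAvg g z :=
  ENNReal.div_le_div_right (Finset.sum_le_sum h) 4

lemma stepAvg_add : stepAvg (fun w ↦ f w + g w) z = stepAvg f z + stepAvg g z := by
  simp only [stepAvg, Finset.sum_add_distrib, ENNReal.add_div]

lemma stepAvg_const_mul (c : ℝ≥0∞) : stepAvg (fun w ↦ c * g w) z = c * stepAvg g z := by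
  simp only [stepAvg, ← Finset.mul_sum, mul_div_assoc]

lemma stepAvg_const (c : ℝ≥0∞) : stepAvg (fun _ ↦ c) z = c := by
  rw [stepAvg, Finset.sum_const, show dirs.card = 4 by decide, nsmul_eq_mul, mul_comm]
  exact ENNReal.mul_div_cancel_right (by norm_num) (by norm_num)

lemma stepAvg_tsum {ι : Type*} (f : ι → ℤ × ℤ → ℝ≥0∞) :
    stepAvg (fun w ↦ ∑' i, f i w) z = ∑' i, stepAvg (f i) z := by
  simp only [stepAvg, div_eq_mul_inv, ENNReal.tsum_mul_right]
  rw [Summable.tsum_finsetSum fun _ _ ↦ ENNReal.summable]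

lemma stepAvg_ofReal {φ : ℤ × ℤ → ℝ} (hφ : ∀ d ∈ dirs, 0 ≤ φ (z + d)) :
    stepAvg (fun w ↦ ENNReal.ofReal (φ w)) z = ENNReal.ofReal ((∑ d ∈ dirs, φ (z + d)) / 4) := by
  rw [stepAvg, ← ENNReal.ofReal_sum_of_nonneg hφ, ENNReal.ofReal_div_of_pos (by norm_num),
    ENNReal.ofReal_ofNat]

lemma le_four_mul_stepAvg (g : ℤ × ℤ → ℝ≥0∞) (z : ℤ × ℤ) {d : ℤ × ℤ} (hd : d ∈ dirs) :
    g (z + d) ≤ 4 * stepAvg g z := by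
  rw [stepAvg, ENNReal.mul_div_cancel (by norm_num) (by norm_num)]
  exact Finset.single_le_sum (f := fun d ↦ g (z + d)) (fun _ _ ↦ zero_le) hd

end StepAvg

section HitValue

variable {A : Set (ℤ × ℤ)} {b c g : ℤ × ℤ → ℝ≥0∞} {z : ℤ × ℤ}

lemma hitValueAt_zero_of_mem (hz : z ∈ A) : hitValueAt A b 0 z = b z :=
  Set.indicator_of_mem hz b

lemma hitValueAt_zero_of_notMem (hz : z ∉ A) : hitValueAt A b 0 z = 0 :=
  Set.indicator_of_notMem hz b

lemma hitValueAt_succ_of_mem (n : ℕ) (hz : z ∈ A) : hitValueAt A b (n + 1) z = 0 :=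
  Set.indicator_of_notMem (not_not_intro hz) _

lemma hitValueAt_succ_of_notMem (n : ℕ) (hz : z ∉ A) :
    hitValueAt A b (n + 1) z = stepAvg (hitValueAt A b n) z :=
  Set.indicator_of_mem hz _

lemma hitValue_of_mem (hz : z ∈ A) : hitValue A b z = b z := by
  rw [hitValue, tsum_eq_zero_add' ENNReal.summable]
  simp [hitValueAt_zero_of_mem hz, hitValueAt_succ_of_mem _ hz]

lemma hitValue_of_notMem (hz : z ∉ A) : hitValue A b z = stepAvg (hitValue A b) z := by
  unfold hitValue
  rw [tsum_eq_zero_add' ENNReal.summable, stepAvg_tsum]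
  simp [hitValueAt_zero_of_notMem hz, hitValueAt_succ_of_notMem _ hz]

/-- Maximum principle; where the bound is already known, the walk may leave the region `D`. -/
lemma hitValue_le_of_stepAvg_le {D : Set (ℤ × ℤ)} (hA : ∀ z ∈ D, z ∈ A → b z ≤ g z)
    (hD : ∀ z ∈ D, z ∉ A →
      hitValue A b z ≤ g z ∨ stepAvg g z ≤ g z ∧ ∀ d ∈ dirs, z + d ∈ D)
    (hz : z ∈ D) : hitValue A b z ≤ g z := by
  refine ENNReal.tsum_le_of_sum_range_le fun n ↦ ?_
  induction n generalizing z with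
  | zero => simp
  | succ n ih =>
    by_cases hzA : z ∈ A
    · rw [Finset.sum_range_succ']
      simpa [hitValueAt_zero_of_mem hzA, hitValueAt_succ_of_mem _ hzA] using hA z hz hzA
    rcases hD z hz hzA with hle | ⟨hsuper, hclosed⟩
    · exact (ENNReal.sum_le_tsum _).trans hle
    calc ∑ k ∈ Finset.range (n + 1), hitValueAt A b k z
        = stepAvg (fun w ↦ ∑ k ∈ Finset.range n, hitValueAt A b k w) z := by
          rw [Finset.sum_range_succ', hitValueAt_zero_of_notMem hzA, add_zero]
          simp only [hitValueAt_succ_of_notMem _ hzA, stepAvg, div_eq_mul_inv, ← Finset.sum_mul]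
          rw [Finset.sum_comm]
      _ ≤ stepAvg g z := stepAvg_mono fun d hd ↦ ih (hclosed d hd)
      _ ≤ g z := hsuper

lemma hitValue_le_of_superharmonic (hA : ∀ z ∈ A, b z ≤ g z) (hg : ∀ z ∉ A, stepAvg g z ≤ g z)
    (z : ℤ × ℤ) : hitValue A b z ≤ g z :=
  hitValue_le_of_stepAvg_le (D := Set.univ) (fun z _ hz ↦ hA z hz)
    (fun z _ hz ↦ .inr ⟨hg z hz, fun _ _ ↦ trivial⟩) trivial

lemma hitValue_mono (h : ∀ z ∈ A, b z ≤ c z) (z : ℤ × ℤ) : hitValue A b z ≤ hitValue A c z :=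
  hitValue_le_of_superharmonic (fun z hz ↦ (h z hz).trans_eq (hitValue_of_mem hz).symm)
    (fun _ hz ↦ (hitValue_of_notMem hz).ge) z

lemma hitValue_congr (h : ∀ z ∈ A, b z = c z) (z : ℤ × ℤ) : hitValue A b z = hitValue A c z :=
  (hitValue_mono (fun z hz ↦ (h z hz).le) z).antisymm (hitValue_mono (fun z hz ↦ (h z hz).ge) z)

lemma hitValue_le_of_forall_le {a : ℝ≥0∞} (hb : ∀ z ∈ A, b z ≤ a) (z : ℤ × ℤ) :
    hitValue A b z ≤ a :=
  hitValue_le_of_superharmonic (g := fun _ ↦ a) hb (fun _ _ ↦ (stepAvg_const a).le) z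

lemma toReal_hitValue_of_notMem (hb : ∀ w, hitValue A b w ≠ ∞) (hz : z ∉ A) :
    (hitValue A b z).toReal = (∑ d ∈ dirs, (hitValue A b (z + d)).toReal) / 4 := by
  rw [hitValue_of_notMem hz, stepAvg, ENNReal.toReal_div, ENNReal.toReal_sum fun _ _ ↦ hb _,
    ENNReal.toReal_ofNat]

lemma hitValueAt_tsum_mul {ι : Type*} (a : ι → ℝ≥0∞) (b : ι → ℤ × ℤ → ℝ≥0∞) (n : ℕ)
    (z : ℤ × ℤ) :
    hitValueAt A (fun w ↦ ∑' i, a i * b i w) n z = ∑' i, a i * hitValueAt A (b i) n z := by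
  induction n generalizing z with
  | zero => by_cases hz : z ∈ A <;> simp [hitValueAt, hz]
  | succ n ih =>
    by_cases hz : z ∈ A
    · simp only [hitValueAt_succ_of_mem n hz, mul_zero, tsum_zero]
    · simp only [hitValueAt_succ_of_notMem n hz, funext ih, stepAvg_tsum, stepAvg_const_mul]

lemma hitValue_tsum_mul {ι : Type*} (a : ι → ℝ≥0∞) (b : ι → ℤ × ℤ → ℝ≥0∞) (z : ℤ × ℤ) :
    hitValue A (fun w ↦ ∑' i, a i * b i w) z = ∑' i, a i * hitValue A (b i) z := by
  simp only [hitValue, hitValueAt_tsum_mul, ← ENNReal.tsum_mul_left]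
  exact ENNReal.tsum_comm

lemma hitValue_const_mul (a : ℝ≥0∞) (b : ℤ × ℤ → ℝ≥0∞) (z : ℤ × ℤ) :
    hitValue A (fun w ↦ a * b w) z = a * hitValue A b z := by
  simpa using hitValue_tsum_mul (ι := Unit) (fun _ ↦ a) (fun _ ↦ b) z

lemma hitValueAt_preimage_add (A : Set (ℤ × ℤ)) (b : ℤ × ℤ → ℝ≥0∞) (a : ℤ × ℤ) (n : ℕ)
    (z : ℤ × ℤ) :
    hitValueAt ((· + a) ⁻¹' A) (fun w ↦ b (w + a)) n z = hitValueAt A b n (z + a) := by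
  induction n generalizing z with
  | zero => rfl
  | succ n ih =>
    by_cases hz : z + a ∈ A
    · rw [hitValueAt_succ_of_mem n hz, hitValueAt_succ_of_mem n (by exact hz)]
    · rw [hitValueAt_succ_of_notMem n hz, hitValueAt_succ_of_notMem n (by exact hz)]
      simp only [stepAvg, ih, add_right_comm]

lemma hitValue_preimage_add (A : Set (ℤ × ℤ)) (b : ℤ × ℤ → ℝ≥0∞) (a z : ℤ × ℤ) :
    hitValue ((· + a) ⁻¹' A) (fun w ↦ b (w + a)) z = hitValue A b (z + a) := by
  simp only [hitValue, hitValueAt_preimage_add]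

end HitValue

section EHitProb

variable {A : Set (ℤ × ℤ)} {x z : ℤ × ℤ}

lemma hitValueAt_single_zero_of_ne (hzx : z ≠ x) : hitValueAt A (Pi.single x 1) 0 z = 0 :=
  Set.indicator_apply_eq_zero.mpr fun _ ↦ Pi.single_eq_of_ne hzx 1

lemma ehitProb_le_one (A : Set (ℤ × ℤ)) (x z : ℤ × ℤ) : ehitProb A x z ≤ 1 := by
  refine hitValue_le_of_forall_le (fun w _ ↦ ?_) z
  rw [Pi.single_apply]
  split_ifs <;> simp

lemma ehitProb_ne_top (A : Set (ℤ × ℤ)) (x z : ℤ × ℤ) : ehitProb A x z ≠ ∞ :=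
  ne_top_of_le_ne_top ENNReal.one_ne_top (ehitProb_le_one A x z)

lemma ehitProb_self (hx : x ∈ A) : ehitProb A x x = 1 :=
  (hitValue_of_mem hx).trans (Pi.single_eq_same x 1)

lemma ehitProb_of_mem_of_ne (hz : z ∈ A) (hzx : z ≠ x) : ehitProb A x z = 0 :=
  (hitValue_of_mem hz).trans (Pi.single_eq_of_ne hzx 1)

/-- By the strong Markov property at the first visit to `y`. -/
lemma ehitProb_le_mul_of_subset {A' : Set (ℤ × ℤ)} (hAA' : A ⊆ A') {y : ℤ × ℤ} {C : ℝ≥0∞}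
    (hC : 1 ≤ C * ehitProb A x y) (z : ℤ × ℤ) : ehitProb A' y z ≤ C * ehitProb A x z := by
  refine hitValue_le_of_superharmonic (g := fun w ↦ C * ehitProb A x w) (fun w _ ↦ ?_)
    (fun w hw ↦ ?_) z
  · by_cases hwy : w = y
    · rwa [hwy, Pi.single_eq_same]
    · simp [Pi.single_eq_of_ne hwy]
  · rw [stepAvg_const_mul]
    exact mul_le_mul_right (hitValue_of_notMem fun hwA ↦ hw (hAA' hwA)).ge C

/-- The walk may go straight down from `x + (0, k)` to `x`. -/
lemma one_le_four_pow_mul_ehitProb (hx : x ∈ A) (k : ℕ)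
    (hfree : ∀ i : ℕ, 0 < i → i ≤ k → x + (0, (i : ℤ)) ∉ A) :
    1 ≤ 4 ^ k * ehitProb A x (x + (0, (k : ℤ))) := by
  induction k with
  | zero => simp [show x + (0, 0) = x from add_zero x, ehitProb_self hx]
  | succ k ih =>
    have hdown : x + (0, ((k + 1 : ℕ) : ℤ)) + (0, -1) = x + (0, (k : ℤ)) := by
      ext <;> simp [add_assoc]
    calc 1 ≤ 4 ^ k * ehitProb A x (x + (0, (k : ℤ))) :=
          ih fun i hi hik ↦ hfree i hi (hik.trans k.le_succ)
      _ ≤ 4 ^ k * (4 * stepAvg (ehitProb A x) (x + (0, ((k + 1 : ℕ) : ℤ)))) := by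
          gcongr
          rw [← hdown]
          exact le_four_mul_stepAvg _ _ (by decide)
      _ = 4 ^ (k + 1) * ehitProb A x (x + (0, ((k + 1 : ℕ) : ℤ))) := by
          rw [pow_succ, mul_assoc]
          exact congrArg _ (congrArg _ (hitValue_of_notMem (hfree _ k.succ_pos le_rfl)).symm)

end EHitProb

section FirstHit

lemma pos_zero (z : ℤ × ℤ) {n : ℕ} (σ : Fin n → ℤ × ℤ) : pos z σ 0 = z := by
  simp [pos]

lemma pos_cons_succ (z d : ℤ × ℤ) {n : ℕ} (σ : Fin n → ℤ × ℤ) (m : ℕ) :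
    pos z (Fin.cons d σ : Fin (n + 1) → ℤ × ℤ) (m + 1) = pos (z + d) σ m := by
  simp [pos, Finset.sum_filter, Fin.sum_univ_succ, add_assoc]

lemma stepProb_nonneg (n : ℕ) (E : (Fin n → ℤ × ℤ) → Prop) : 0 ≤ stepProb n E := by
  unfold stepProb
  positivity

lemma stepProb_false (n : ℕ) : stepProb n (fun _ ↦ False) = 0 := by
  simp [stepProb]

lemma stepProb_succ (n : ℕ) (E : (Fin (n + 1) → ℤ × ℤ) → Prop) :
    stepProb (n + 1) E = (∑ d ∈ dirs, stepProb n fun σ ↦ E (Fin.cons d σ)) / 4 := by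
  have splitFirst : {σ : Fin (n + 1) → ↥dirs // E fun i ↦ σ i} ≃
      Σ d : ↥dirs, {σ : Fin n → ↥dirs // E (Fin.cons (d : ℤ × ℤ) fun i ↦ (σ i : ℤ × ℤ))} :=
    ((Fin.consEquiv fun _ ↦ ↥dirs).subtypeEquiv fun s ↦ iff_of_eq <| congrArg E <|
      (funext <| Fin.cases rfl fun _ ↦ rfl :
        (Fin.cons (s.1 : ℤ × ℤ) fun i ↦ (s.2 i : ℤ × ℤ)) =
          fun i ↦ (Fin.consEquiv (fun _ ↦ ↥dirs) s i : ℤ × ℤ))).symm.trans <|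
    Equiv.subtypeProdEquivSigmaSubtype fun (d : ↥dirs) (σ : Fin n → ↥dirs) ↦
      E (Fin.cons (d : ℤ × ℤ) fun i ↦ (σ i : ℤ × ℤ))
  rw [← Finset.sum_coe_sort dirs]
  simp only [stepProb, Nat.card_congr splitFirst, Nat.card_sigma, Nat.cast_sum, ← Finset.sum_div]
  rw [pow_succ, div_div]

/-- The event that the first `n` steps `σ` bring the walk from `z` to `A` for the first time at
time `n`, and at the point `x`. -/
def FirstHitsAt (A : Set (ℤ × ℤ)) (x z : ℤ × ℤ) {n : ℕ} (σ : Fin n → ℤ × ℤ) : Prop :=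
  pos z σ n = x ∧ x ∈ A ∧ ∀ m < n, pos z σ m ∉ A

variable {A : Set (ℤ × ℤ)} {x z : ℤ × ℤ}

lemma firstHitsAt_zero (σ : Fin 0 → ℤ × ℤ) : FirstHitsAt A x z σ ↔ z = x ∧ z ∈ A := by
  simp only [FirstHitsAt, pos_zero, not_lt_zero, false_imp_iff, implies_true, and_true]
  exact and_congr_right fun h ↦ by rw [h]

lemma firstHitsAt_cons (d : ℤ × ℤ) {n : ℕ} (σ : Fin n → ℤ × ℤ) :
    FirstHitsAt A x z (Fin.cons d σ : Fin (n + 1) → ℤ × ℤ) ↔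
      z ∉ A ∧ FirstHitsAt A x (z + d) σ := by
  simp only [FirstHitsAt, Nat.forall_lt_succ_left, pos_zero, pos_cons_succ]
  tauto

lemma ofReal_stepProb_firstHitsAt (n : ℕ) (z : ℤ × ℤ) :
    ENNReal.ofReal (stepProb n fun σ ↦ FirstHitsAt A x z σ) =
      hitValueAt A (Pi.single x 1) n z := by
  induction n generalizing z with
  | zero =>
    obtain rfl | hzx := eq_or_ne z x
    · by_cases hz : z ∈ A <;> simp [firstHitsAt_zero, stepProb, hitValueAt, hz]
    · simp [firstHitsAt_zero, stepProb, hzx, hitValueAt_single_zero_of_ne hzx]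
  | succ n ih =>
    simp only [stepProb_succ, firstHitsAt_cons]
    by_cases hz : z ∈ A
    · simp [hz, stepProb_false, hitValueAt_succ_of_mem n hz]
    · simp only [hz, not_false_eq_true, true_and]
      rw [hitValueAt_succ_of_notMem n hz, ← funext ih]
      exact (stepAvg_ofReal (φ := fun w ↦ stepProb n fun σ ↦ FirstHitsAt A x w σ)
        fun _ _ ↦ stepProb_nonneg _ _).symm

lemma hitProb_eq_toReal_ehitProb (A : Set (ℤ × ℤ)) (x z : ℤ × ℤ) :
    hitProb z A x = (ehitProb A x z).toReal := by
  simp only [ehitProb, hitValue, ← ofReal_stepProb_firstHitsAt]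
  rw [ENNReal.tsum_toReal_eq fun _ ↦ ENNReal.ofReal_ne_top]
  exact tsum_congr fun n ↦ (ENNReal.toReal_ofReal (stepProb_nonneg n _)).symm

lemma hitProb_nonneg (A : Set (ℤ × ℤ)) (x z : ℤ × ℤ) : 0 ≤ hitProb z A x := by
  rw [hitProb_eq_toReal_ehitProb]
  exact ENNReal.toReal_nonneg

lemma harm_nonneg (A : Set (ℤ × ℤ)) (N : ℕ) (x : ℤ × ℤ) : 0 ≤ harm A N x :=
  tsum_nonneg fun _ ↦ hitProb_nonneg _ _ _

lemma harm_eq_toReal_tsum {N : ℕ} (hx : x.2 ≠ N) :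
    harm A N x = (∑' k : ℤ, ehitProb (A ∪ lineH 0) x (k, N)).toReal := by
  set f := ehitProb (A ∪ lineH 0) x
  have hline (k : ℤ) : (lineH N \ A).indicator f (k, N) = f (k, N) := by
    by_cases hk : (k, (N : ℤ)) ∈ A
    · rw [Set.indicator_of_notMem fun h ↦ h.2 hk]
      exact (ehitProb_of_mem_of_ne (.inl hk) fun h ↦ hx (congrArg Prod.snd h).symm).symm
    · exact Set.indicator_of_mem (show (k, (N : ℤ)) ∈ lineH N \ A from ⟨rfl, hk⟩) f
  have hsupport : ((lineH N \ A).indicator f).support ⊆ Set.range fun k : ℤ ↦ (k, (N : ℤ)) :=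
    fun z hz ↦ ⟨z.1, Prod.ext rfl (Set.mem_of_indicator_ne_zero hz).1.symm⟩
  calc harm A N x = ∑' z : ↥(lineH N \ A), (f z).toReal :=
        tsum_congr fun z ↦ hitProb_eq_toReal_ehitProb _ _ _
    _ = (∑' z : ↥(lineH N \ A), f z).toReal :=
        (ENNReal.tsum_toReal_eq fun _ ↦ ehitProb_ne_top _ _ _).symm
    _ = (∑' k : ℤ, f (k, N)).toReal := by
        rw [tsum_subtype, ← (Prod.mk_left_injective (N : ℤ)).tsum_eq hsupport]
        simp only [hline]

end FirstHit

section Line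

lemma eq_of_second_difference_eq_zero {u : ℕ → ℝ} {a b : ℝ}
    (hu : ∀ n, u (n + 2) + u n = 2 * u (n + 1)) (hab : ∀ n, u n ∈ Set.Icc a b) (n : ℕ) :
    u n = u 0 := by
  have haffine (n : ℕ) : u n = u 0 + n * (u 1 - u 0) := by
    induction n using Nat.twoStepInduction with
    | zero => simp
    | one => simp
    | more n ih₀ ih₁ =>
      push_cast at ih₁ ⊢
      linarith [hu n]
  suffices hslope : u 1 - u 0 = 0 by rw [haffine n, hslope, mul_zero, add_zero]
  by_contra hslope
  obtain ⟨k, hk⟩ := exists_nat_gt ((b - a) / |u 1 - u 0|)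
  rw [div_lt_iff₀ (abs_pos.mpr hslope)] at hk
  have hdist : |u k - u 0| = k * |u 1 - u 0| := by
    rw [haffine k, add_sub_cancel_left, abs_mul, Nat.abs_cast]
  have hle : |u k - u 0| ≤ b - a := Real.dist_le_of_mem_Icc (hab k) (hab 0)
  linarith

variable {H : ℤ}

lemma hitValue_lineH_add_left (H : ℤ) (b : ℤ × ℤ → ℝ≥0∞) (a : ℤ) (z : ℤ × ℤ) :
    hitValue (lineH H) (fun w ↦ b (w + (a, 0))) z = hitValue (lineH H) b (z + (a, 0)) := by
  have hline : (· + (a, 0)) ⁻¹' lineH H = lineH H := by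
    ext w
    simp [lineH]
  rw [← hitValue_preimage_add, hline]

lemma ehitProb_lineH_eq_sub (H k x y : ℤ) :
    ehitProb (lineH H) (k, H) (x, y) = ehitProb (lineH H) (0, H) (x - k, y) := by
  have h := hitValue_lineH_add_left H (Pi.single (0, H) 1) (-k) (x, y)
  rw [Prod.mk_add_mk, add_zero, ← sub_eq_add_neg] at h
  rw [ehitProb, ehitProb, ← h]
  congr 1
  funext w
  simp [Pi.single_apply, Prod.ext_iff, add_neg_eq_zero]

lemma hitValue_lineH_eq_tsum (b : ℤ × ℤ → ℝ≥0∞) (z : ℤ × ℤ) :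
    hitValue (lineH H) b z = ∑' k : ℤ, b (k, H) * ehitProb (lineH H) (k, H) z := by
  simp only [ehitProb]
  rw [← hitValue_tsum_mul]
  refine hitValue_congr (fun w hw ↦ ?_) z
  obtain rfl : w.2 = H := hw
  rw [tsum_eq_single w.1 fun k hk ↦ by simp [Prod.ext_iff, hk.symm]]
  simp

/-- Along a vertical line the harmonic function `hitValue (lineH H) 1` is bounded and affine. -/
lemma hitValue_lineH_one {z : ℤ × ℤ} (hz : H ≤ z.2) : hitValue (lineH H) (fun _ ↦ 1) z = 1 := by
  set h := hitValue (lineH H) fun _ ↦ 1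
  have hle (w : ℤ × ℤ) : h w ≤ 1 := hitValue_le_of_forall_le (fun _ _ ↦ le_rfl) w
  have htop (w : ℤ × ℤ) : h w ≠ ∞ := ne_top_of_le_ne_top ENNReal.one_ne_top (hle w)
  have hshift (x y : ℤ) : h (x, y) = h (0, y) := by
    simpa [h] using (hitValue_lineH_add_left H (fun _ ↦ 1) x (0, y)).symm
  set u : ℕ → ℝ := fun n ↦ (h (0, H + n)).toReal
  have hu (n : ℕ) : u (n + 2) + u n = 2 * u (n + 1) := by
    have hmean : (h (0, H + (n + 1 : ℕ))).toReal =
        (∑ d ∈ dirs, (h ((0, H + ((n + 1 : ℕ) : ℤ)) + d)).toReal) / 4 :=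
      toReal_hitValue_of_notMem htop (by lia : H + ((n + 1 : ℕ) : ℤ) ≠ H)
    rw [sum_dirs] at hmean
    simp only [Prod.mk_add_mk, add_zero, hshift (0 + 1), hshift (0 + -1)] at hmean
    rw [show H + ((n + 1 : ℕ) : ℤ) + 1 = H + (n + 2 : ℕ) by push_cast; ring,
      show H + ((n + 1 : ℕ) : ℤ) + -1 = H + n by push_cast; ring] at hmean
    simp only [u]
    linarith
  have hu01 (n : ℕ) : u n ∈ Set.Icc 0 1 :=
    ⟨ENNReal.toReal_nonneg, ENNReal.toReal_mono ENNReal.one_ne_top (hle _)⟩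
  obtain ⟨n, hn⟩ := Int.le.dest hz
  have hu0 : u 0 = 1 := by
    simp [u, h, hitValue_of_mem (show (0, H) ∈ lineH H from rfl)]
  rw [← Prod.mk.eta (p := z), hshift, ← hn, ← ENNReal.toReal_eq_one_iff]
  exact (eq_of_second_difference_eq_zero hu hu01 n).trans hu0

lemma hitValue_lineH_const (a : ℝ≥0∞) {z : ℤ × ℤ} (hz : H ≤ z.2) :
    hitValue (lineH H) (fun _ ↦ a) z = a := by
  simpa [hitValue_lineH_one hz] using hitValue_const_mul (A := lineH H) a (fun _ ↦ 1) z

lemma tsum_ehitProb_lineH {z : ℤ × ℤ} (hz : H ≤ z.2) :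
    ∑' k : ℤ, ehitProb (lineH H) (k, H) z = 1 := by
  simpa [hitValue_lineH_one hz] using (hitValue_lineH_eq_tsum (H := H) (fun _ ↦ 1) z).symm

lemma tsum_hitValue_lineH {N : ℤ} (hN : H ≤ N) (b : ℤ × ℤ → ℝ≥0∞) :
    ∑' x : ℤ, hitValue (lineH H) b (x, N) = ∑' k : ℤ, b (k, H) := by
  have hmass (k : ℤ) : ∑' x : ℤ, ehitProb (lineH H) (k, H) (x, N) = 1 := by
    rw [← tsum_ehitProb_lineH (z := (0, N)) hN, ← (Equiv.subLeft k).tsum_eq]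
    refine tsum_congr fun j ↦ ?_
    rw [ehitProb_lineH_eq_sub, ehitProb_lineH_eq_sub H j, Equiv.subLeft_apply]
    congr 2
    ring
  simp only [hitValue_lineH_eq_tsum]
  rw [ENNReal.tsum_comm]
  simp only [ENNReal.tsum_mul_left, hmass, mul_one]

lemma tsum_ehitProb_lineH_line {N : ℤ} (hN : H ≤ N) (k : ℤ) :
    ∑' x : ℤ, ehitProb (lineH H) (k, H) (x, N) = 1 := by
  refine (tsum_hitValue_lineH hN _).trans ?_
  rw [tsum_eq_single k fun j hj ↦ by simp [hj]]
  exact Pi.single_eq_same _ _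

end Line

section KernelDecay

variable {H : ℤ}

lemma hitValueAt_lineH_single_le (n : ℕ) {x x' : ℤ} (y : ℤ) (hle : x'.natAbs ≤ x.natAbs)
    (hparity : x % 2 = x' % 2) :
    hitValueAt (lineH H) (Pi.single (0, H) 1) n (x, y) ≤
      hitValueAt (lineH H) (Pi.single (0, H) 1) n (x', y) := by
  induction n generalizing x x' y with
  | zero =>
    by_cases hx : x = 0
    · rw [hx, show x' = 0 by lia]
    · rw [hitValueAt_single_zero_of_ne (by simp [hx])]
      exact zero_le
  | succ n ih =>
    by_cases hy : y = H
    · rw [hitValueAt_succ_of_mem n (by exact hy)]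
      exact zero_le
    rw [hitValueAt_succ_of_notMem n (by exact hy), hitValueAt_succ_of_notMem n (by exact hy)]
    refine ENNReal.div_le_div_right ?_ 4
    simp only [sum_dirs, Prod.mk_add_mk, add_zero, ← add_assoc]
    refine add_le_add (add_le_add ?_ (ih _ hle hparity)) (ih _ hle hparity)
    by_cases hsign : 0 ≤ x ∧ 0 ≤ x' ∨ x < 0 ∧ x' < 0
    · exact add_le_add (ih _ (by lia) (by lia)) (ih _ (by lia) (by lia))
    · -- For opposite signs, couple with the reflected walk: a step right with a step left.
      rw [add_comm]
      exact add_le_add (ih _ (by lia) (by lia)) (ih _ (by lia) (by lia))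

lemma ehitProb_lineH_le_of_natAbs_le {x x' : ℤ} (y : ℤ) (hle : x'.natAbs ≤ x.natAbs)
    (hparity : x % 2 = x' % 2) :
    ehitProb (lineH H) (0, H) (x, y) ≤ ehitProb (lineH H) (0, H) (x', y) :=
  ENNReal.tsum_le_tsum fun n ↦ hitValueAt_lineH_single_le n y hle hparity

/-- The `|x| + 1` points `x'` with `|x'| ≤ |x|` of the same parity as `x` carry at least as much
mass each. -/
lemma natAbs_succ_mul_ehitProb_lineH_le_one (x y : ℤ) :
    (x.natAbs + 1 : ℝ≥0∞) * ehitProb (lineH H) (0, H) (x, y) ≤ 1 := by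
  set shift : ℕ → ℤ := fun i ↦ 2 * i - x.natAbs
  have hshift : Function.Injective shift := fun i j hij ↦ by grind
  calc (x.natAbs + 1 : ℝ≥0∞) * ehitProb (lineH H) (0, H) (x, y)
      = ∑ _i ∈ Finset.range (x.natAbs + 1), ehitProb (lineH H) (0, H) (x, y) := by simp
    _ ≤ ∑ i ∈ Finset.range (x.natAbs + 1), ehitProb (lineH H) (shift i, H) (0, y) := by
        refine Finset.sum_le_sum fun i hi ↦ ?_
        rw [Finset.mem_range] at hi
        rw [ehitProb_lineH_eq_sub H (shift i)]
        exact ehitProb_lineH_le_of_natAbs_le y (by lia) (by lia)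
    _ ≤ ∑' i, ehitProb (lineH H) (shift i, H) (0, y) := ENNReal.sum_le_tsum _
    _ ≤ ∑' k : ℤ, ehitProb (lineH H) (k, H) (0, y) :=
        ENNReal.tsum_comp_le_tsum_of_injective hshift _
    _ = hitValue (lineH H) (fun _ ↦ 1) (0, y) := by simp [hitValue_lineH_eq_tsum]
    _ ≤ 1 := hitValue_le_of_forall_le (fun _ _ ↦ le_rfl) _

lemma ehitProb_lineH_le_ofReal_inv {m : ℝ} (hm : 0 < m) {x : ℤ} (hx : m ≤ |(x : ℝ)|) (y : ℤ) :
    ehitProb (lineH H) (0, H) (x, y) ≤ ENNReal.ofReal m⁻¹ := by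
  rw [ENNReal.ofReal_inv_of_pos hm, ENNReal.le_inv_iff_mul_le, mul_comm]
  refine le_trans (mul_le_mul_left ?_ _) (natAbs_succ_mul_ehitProb_lineH_le_one x y)
  rw [← Int.cast_abs, Int.abs_eq_natAbs, Int.cast_natCast] at hx
  exact (ENNReal.ofReal_le_natCast.mpr hx).trans le_self_add

end KernelDecay

section Box

variable {x₀ H m : ℤ} {z : ℤ × ℤ}

/-- The square box of height `m` and width `2 * m` standing on the point `(x₀, H)` of `L_H`. -/
def box (x₀ H m : ℤ) : Set (ℤ × ℤ) :=
  {z | |z.1 - x₀| ≤ m ∧ H ≤ z.2 ∧ z.2 ≤ H + m}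

/-- A discrete harmonic polynomial, at least `1` on the sides and on the top of `box x₀ H m`: it
bounds the probability of leaving the box through them. -/
noncomputable def boxBarrier (x₀ H m : ℤ) (z : ℤ × ℤ) : ℝ :=
  ((z.1 - x₀) ^ 2 + (z.2 - H) * (2 * m - (z.2 - H))) / m ^ 2

lemma sum_dirs_boxBarrier (x₀ H m : ℤ) (z : ℤ × ℤ) :
    (∑ d ∈ dirs, boxBarrier x₀ H m (z + d)) / 4 = boxBarrier x₀ H m z := by
  simp only [sum_dirs, boxBarrier, Prod.fst_add, Prod.snd_add]
  push_cast
  ring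

lemma boxBarrier_nonneg (hz : z ∈ box x₀ H m) : 0 ≤ boxBarrier x₀ H m z := by
  obtain ⟨-, hbot, htop⟩ := hz
  have hbot' : (H : ℝ) ≤ z.2 := mod_cast hbot
  have htop' : (z.2 : ℝ) ≤ H + m := mod_cast htop
  have hheight : 0 ≤ (z.2 - H : ℝ) * (2 * m - (z.2 - H)) :=
    mul_nonneg (by linarith) (by linarith)
  unfold boxBarrier
  positivity

lemma one_le_boxBarrier (hm : 1 ≤ m) (hz : z ∈ box x₀ H m)
    (hexit : |z.1 - x₀| = m ∨ z.2 = H + m) : 1 ≤ boxBarrier x₀ H m z := by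
  obtain ⟨-, hbot, htop⟩ := hz
  have hm' : (1 : ℝ) ≤ m := mod_cast hm
  rw [boxBarrier, one_le_div (by positivity)]
  rcases hexit with hside | htop
  · have hbot' : (H : ℝ) ≤ z.2 := mod_cast hbot
    have htop' : (z.2 : ℝ) ≤ H + m := mod_cast htop
    have hside' : |(z.1 - x₀ : ℝ)| = m := mod_cast hside
    rw [← sq_abs (z.1 - x₀ : ℝ), hside', le_add_iff_nonneg_right]
    exact mul_nonneg (by linarith) (by linarith)
  · have hheight : (z.2 - H : ℝ) = m := by rw [htop]; push_cast; ring
    rw [hheight]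
    nlinarith [sq_nonneg (z.1 - x₀ : ℝ)]

lemma boxBarrier_axis_le (hm : 1 ≤ m) (j : ℤ) : boxBarrier x₀ H m (x₀, H + j) ≤ 2 * j / m := by
  have hm' : (1 : ℝ) ≤ m := mod_cast hm
  rw [boxBarrier, div_le_div_iff₀ (by positivity) (by positivity)]
  push_cast
  nlinarith [mul_nonneg (sq_nonneg (j : ℝ)) (zero_le_one.trans hm')]

lemma add_mem_box (hz : z ∈ box x₀ H m) (hbot : z.2 ≠ H) (hside : |z.1 - x₀| ≠ m)
    (htop : z.2 ≠ H + m) {d : ℤ × ℤ} (hd : d ∈ dirs) : z + d ∈ box x₀ H m := by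
  have hdirs : ∀ d ∈ dirs, |d.1| ≤ 1 ∧ |d.2| ≤ 1 := by decide
  have hd' := hdirs d hd
  simp only [box, Set.mem_ofPred_eq, Prod.fst_add, Prod.snd_add] at hz ⊢
  grind

lemma hitValue_lineH_le_add_boxBarrier {b b' : ℤ × ℤ → ℝ≥0∞} {c : ℝ≥0∞} (hm : 1 ≤ m)
    (hb : ∀ k, |k - x₀| ≤ m → b (k, H) ≤ b' (k, H))
    (hc : ∀ z ∈ box x₀ H m, hitValue (lineH H) b z ≤ c) (hz : z ∈ box x₀ H m) :
    hitValue (lineH H) b z ≤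
      hitValue (lineH H) b' z + c * ENNReal.ofReal (boxBarrier x₀ H m z) := by
  refine hitValue_le_of_stepAvg_le (D := box x₀ H m)
    (g := fun w ↦ hitValue (lineH H) b' w + c * ENNReal.ofReal (boxBarrier x₀ H m w))
    (fun w hw hline ↦ ?_) (fun w hw hline ↦ ?_) hz
  · rw [hitValue_of_mem hline]
    obtain rfl : w.2 = H := hline
    exact (hb w.1 hw.1).trans le_self_add
  by_cases hexit : |w.1 - x₀| = m ∨ w.2 = H + m
  · left
    calc hitValue (lineH H) b w ≤ c * 1 := (hc w hw).trans_eq (mul_one c).symm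
      _ ≤ c * ENNReal.ofReal (boxBarrier x₀ H m w) := by
          gcongr
          exact ENNReal.one_le_ofReal.mpr (one_le_boxBarrier hm hw hexit)
      _ ≤ _ := le_add_self
  · right
    rw [not_or] at hexit
    have hmem : ∀ d ∈ dirs, w + d ∈ box x₀ H m := fun d ↦ add_mem_box hw hline hexit.1 hexit.2
    refine ⟨le_of_eq ?_, hmem⟩
    rw [stepAvg_add, stepAvg_const_mul, stepAvg_ofReal fun d hd ↦ boxBarrier_nonneg (hmem d hd),
      sum_dirs_boxBarrier, ← hitValue_of_notMem hline]

lemma axis_mem_box {j : ℤ} (hj : 0 ≤ j) (hjm : j ≤ m) : (x₀, H + j) ∈ box x₀ H m := by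
  simp only [box, Set.mem_ofPred_eq, sub_self, abs_zero]
  lia

/-- The box below the starting point has size `|x| / 2`, so that it misses `(0, H)`, and the kernel
is at most of order `1 / |x|` on all of it. -/
lemma ehitProb_lineH_le_div_sq {x j : ℤ} (hj : 1 ≤ j) (hjx : 2 * j ≤ |x|) :
    ehitProb (lineH H) (0, H) (x, H + j) ≤ ENNReal.ofReal (18 * j / x ^ 2) := by
  set m : ℤ := |x| / 2
  have hm : 1 ≤ m := by lia
  have hxm : (x : ℝ) ^ 2 ≤ (3 * m) ^ 2 := by
    rw [sq_le_sq]
    exact_mod_cast show |x| ≤ |3 * m| by grind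
  have hx : (0 : ℝ) < x ^ 2 := by
    have : x ≠ 0 := by grind
    positivity
  have hsmall : ∀ z ∈ box x H m,
      hitValue (lineH H) (Pi.single (0, H) 1) z ≤ ENNReal.ofReal (m : ℝ)⁻¹ := fun z hz ↦
    ehitProb_lineH_le_ofReal_inv (by positivity) (mod_cast show m ≤ |z.1| by grind [hz.1]) z.2
  have hfar (k : ℤ) (hk : |k - x| ≤ m) :
      (Pi.single (0, H) 1 : ℤ × ℤ → ℝ≥0∞) (k, H) ≤ 0 := by
    rw [Pi.single_eq_of_ne (by simpa using by grind : (k, H) ≠ (0, H))]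
  calc ehitProb (lineH H) (0, H) (x, H + j)
      ≤ hitValue (lineH H) (fun _ ↦ 0) (x, H + j) +
          ENNReal.ofReal (m : ℝ)⁻¹ * ENNReal.ofReal (boxBarrier x H m (x, H + j)) :=
        hitValue_lineH_le_add_boxBarrier hm hfar hsmall (axis_mem_box (by lia) (by lia))
    _ = ENNReal.ofReal ((m : ℝ)⁻¹ * boxBarrier x H m (x, H + j)) := by
        rw [hitValue_lineH_const 0 (by lia : H ≤ H + j), zero_add,
          ENNReal.ofReal_mul (by positivity)]
    _ ≤ ENNReal.ofReal (18 * j / x ^ 2) := by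
        refine ENNReal.ofReal_le_ofReal ?_
        calc (m : ℝ)⁻¹ * boxBarrier x H m (x, H + j) ≤ (m : ℝ)⁻¹ * (2 * j / m) := by
              gcongr
              exact boxBarrier_axis_le hm j
          _ = 18 * j / (3 * m) ^ 2 := by ring
          _ ≤ 18 * j / x ^ 2 := by gcongr

lemma half_le_hitValue_lineH {b : ℤ × ℤ → ℝ≥0∞} {c : ℝ≥0∞} {j : ℤ} (hc : c ≠ ∞) (hm : 1 ≤ m)
    (hj : 0 ≤ j) (hjm : 4 * j ≤ m) (hb : ∀ k, |k - x₀| ≤ m → c ≤ b (k, H)) :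
    c / 2 ≤ hitValue (lineH H) b (x₀, H + j) := by
  have hm' : (0 : ℝ) < m := by exact_mod_cast (by lia : 0 < m)
  have hbarrier : ENNReal.ofReal (boxBarrier x₀ H m (x₀, H + j)) ≤ 2⁻¹ := by
    rw [← ENNReal.ofReal_ofNat, ← ENNReal.ofReal_inv_of_pos two_pos]
    refine ENNReal.ofReal_le_ofReal ((boxBarrier_axis_le hm j).trans ?_)
    rw [div_le_iff₀ hm']
    have hjm' : (4 * j : ℝ) ≤ m := mod_cast hjm
    linarith
  have hbox : (x₀, H + j) ∈ box x₀ H m := axis_mem_box hj (by lia)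
  have hle := hitValue_lineH_le_add_boxBarrier (b := fun _ ↦ c) hm hb
    (fun z hz ↦ (hitValue_lineH_const c hz.2.1).le) hbox
  rw [hitValue_lineH_const c hbox.2.1] at hle
  refine (ENNReal.add_le_add_iff_right (ENNReal.div_ne_top hc two_ne_zero)).mp ?_
  calc c / 2 + c / 2 = c := ENNReal.add_halves c
    _ ≤ hitValue (lineH H) b (x₀, H + j) +
          c * ENNReal.ofReal (boxBarrier x₀ H m (x₀, H + j)) := hle
    _ ≤ hitValue (lineH H) b (x₀, H + j) + c / 2 := by
        rw [div_eq_mul_inv]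
        gcongr

end Box

section Domination

lemma exists_tsum_indicator_lt_abs_le {a : ℤ → ℝ≥0∞} (ha : ∑' k, a k ≠ ∞) {ε : ℝ≥0∞}
    (hε : ε ≠ 0) : ∃ R : ℤ, ∑' k, {k : ℤ | R < |k|}.indicator a k ≤ ε := by
  obtain ⟨s, hs⟩ := ((ENNReal.tendsto_tsum_compl_atTop_zero ha).eventually_le_const
    (pos_iff_ne_zero.mpr hε)).exists
  refine ⟨(s.sup Int.natAbs : ℕ), le_trans ?_ hs⟩
  rw [← tsum_subtype {k : ℤ | ((s.sup Int.natAbs : ℕ) : ℤ) < |k|} a]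
  refine ENNReal.tsum_mono_subtype a fun k hk hks ↦ ?_
  have hle : k.natAbs ≤ s.sup Int.natAbs := Finset.le_sup hks
  rw [Set.mem_ofPred_eq, Int.abs_eq_natAbs] at hk
  lia

lemma tsum_ofReal_abs_rpow_ne_top {β : ℝ} (hβ : β < 1) (C : ℝ) :
    ∑' k : ℤ, ENNReal.ofReal (C * |(k : ℝ)| ^ (β - 2)) ≠ ∞ := by
  have hsum := (Real.summable_abs_int_rpow (b := 2 - β) (by linarith)).mul_left C
  rw [neg_sub] at hsum
  exact hsum.tsum_ofReal_ne_top

lemma exists_mul_rpow_le {β : ℝ} (hβ : β < 1) (C : ℝ) :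
    ∃ R : ℝ, ∀ t, R ≤ t → C * t ^ β ≤ t := by
  obtain ⟨R, hR⟩ := ((tendsto_rpow_atTop (sub_pos.mpr hβ)).eventually_ge_atTop C).and
    (eventually_gt_atTop 0) |>.exists_forall_of_atTop
  refine ⟨R, fun t ht ↦ ?_⟩
  obtain ⟨hC, ht0⟩ := hR t ht
  calc C * t ^ β ≤ t ^ (1 - β) * t ^ β := by gcongr
    _ = t := by rw [← Real.rpow_add ht0, sub_add_cancel, Real.rpow_one]

lemma rpow_le_four_mul_rpow {β s t : ℝ} (hβ0 : 0 ≤ β) (hβ2 : β ≤ 2) (hs : 0 < s)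
    (hst : s ≤ 2 * t) :
    t ^ (β - 2) ≤ 4 * s ^ (β - 2) := by
  have ht : 0 < t := by linarith
  have htwo : (4 : ℝ)⁻¹ ≤ 2 ^ (β - 2) := by
    calc (4 : ℝ)⁻¹ = 2 ^ (-2 : ℝ) := by norm_num [Real.rpow_neg]
      _ ≤ 2 ^ (β - 2) := Real.rpow_le_rpow_of_exponent_le (by norm_num) (by linarith)
  calc t ^ (β - 2) = 4 * (4⁻¹ * t ^ (β - 2)) := by ring
    _ ≤ 4 * (2 ^ (β - 2) * t ^ (β - 2)) := by gcongr
    _ = 4 * (2 * t) ^ (β - 2) := by rw [Real.mul_rpow two_pos.le ht.le]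
    _ ≤ 4 * s ^ (β - 2) := by
        gcongr 4 * ?_
        exact Real.rpow_le_rpow_of_nonpos hs hst (by linarith)

/-- At height `j ≤ |x| ^ β` above `(x, H)` the kernel is of order `j / x ^ 2 ≤ |x| ^ (β - 2)`,
a summable weight which hardly varies at the scale of the box below `(x, H + j)`. -/
lemma exists_dominating_density {β : ℝ} (hβ0 : 0 ≤ β) (hβ1 : β < 1) :
    ∃ q : ℤ → ℝ≥0∞, ∑' k, q k ≤ 2⁻¹ ∧ ∃ R : ℤ, ∀ H x j : ℤ, R ≤ |x| → 1 ≤ j →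
      (j : ℝ) ≤ |(x : ℝ)| ^ β →
      ehitProb (lineH H) (0, H) (x, H + j) ≤ hitValue (lineH H) (fun w ↦ q w.1) (x, H + j) := by
  set a : ℤ → ℝ≥0∞ := fun k ↦ ENNReal.ofReal (144 * |(k : ℝ)| ^ (β - 2))
  obtain ⟨R₁, hR₁⟩ := exists_tsum_indicator_lt_abs_le (tsum_ofReal_abs_rpow_ne_top hβ1 144)
    (ε := 2⁻¹) (by simp)
  obtain ⟨R₂, hR₂⟩ := exists_mul_rpow_le hβ1 8
  refine ⟨{k : ℤ | R₁ < |k|}.indicator a, hR₁, max (2 * |R₁| + 2) ⌈R₂⌉,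
    fun H x j hx hj hjβ ↦ ?_⟩
  have hjx : 8 * j ≤ |x| := by
    have ht : R₂ ≤ |(x : ℝ)| := by
      have := Int.ceil_le.mp ((le_max_right _ _).trans hx)
      rwa [Int.cast_abs] at this
    have : (8 * j : ℝ) ≤ |(x : ℝ)| := by linarith [hR₂ _ ht]
    exact_mod_cast this
  have ht : 0 < |(x : ℝ)| := abs_pos.mpr (by norm_cast; grind)
  have hupper : 18 * j / (x : ℝ) ^ 2 ≤ 18 * |(x : ℝ)| ^ (β - 2) := by
    rw [← sq_abs, mul_div_assoc, Real.rpow_sub ht, Real.rpow_two]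
    gcongr
  have hdensity (k : ℤ) (hk : |k - x| ≤ |x| / 2) :
      ENNReal.ofReal (36 * |(x : ℝ)| ^ (β - 2)) ≤ {k : ℤ | R₁ < |k|}.indicator a k := by
    have hlarge : R₁ < |k| := by grind
    have hk0 : 0 < |(k : ℝ)| := abs_pos.mpr (by norm_cast; grind)
    have hkt : |(k : ℝ)| ≤ 2 * |(x : ℝ)| := mod_cast (by grind : |k| ≤ 2 * |x|)
    rw [Set.indicator_of_mem (by exact hlarge)]
    refine ENNReal.ofReal_le_ofReal ?_
    linarith [rpow_le_four_mul_rpow hβ0 (by linarith) hk0 hkt]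
  calc ehitProb (lineH H) (0, H) (x, H + j) ≤ ENNReal.ofReal (18 * j / x ^ 2) :=
        ehitProb_lineH_le_div_sq hj (by lia)
    _ ≤ ENNReal.ofReal (36 * |(x : ℝ)| ^ (β - 2) / 2) := by
        refine ENNReal.ofReal_le_ofReal ?_
        linarith
    _ = ENNReal.ofReal (36 * |(x : ℝ)| ^ (β - 2)) / 2 := by
        rw [ENNReal.ofReal_div_of_pos two_pos, ENNReal.ofReal_ofNat]
    _ ≤ hitValue (lineH H) (fun w ↦ {k : ℤ | R₁ < |k|}.indicator a w.1) (x, H + j) :=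
        half_le_hitValue_lineH (m := |x| / 2) ENNReal.ofReal_ne_top (by lia) (by lia) (by lia)
          hdensity

end Domination

section Escape

variable {A : Set (ℤ × ℤ)} {H : ℤ}

lemma hitValue_lineH_le_add_of_dominated {b b' : ℤ × ℤ → ℝ≥0∞}
    (hdom : ∀ z ∈ A, H < z.2 → hitValue (lineH H) b z ≤ hitValue (lineH H) b' z) {z : ℤ × ℤ}
    (hz : H ≤ z.2) :
    hitValue (lineH H) b z ≤ hitValue (A ∪ lineH H) b z + hitValue (lineH H) b' z := by
  refine hitValue_le_of_stepAvg_le (D := {w | H ≤ w.2})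
    (g := fun w ↦ hitValue (A ∪ lineH H) b w + hitValue (lineH H) b' w)
    (fun w _ hline ↦ ?_) (fun w hw hline ↦ ?_) hz
  · rw [hitValue_of_mem (.inr hline)]
    exact le_self_add
  have hlt : H < w.2 := lt_of_le_of_ne hw (Ne.symm hline)
  by_cases hwA : w ∈ A
  · exact .inl ((hdom w hwA hlt).trans le_add_self)
  refine .inr ⟨?_, fun d hd ↦ ?_⟩
  · rw [stepAvg_add, ← hitValue_of_notMem hline, ← hitValue_of_notMem (not_or.mpr ⟨hwA, hline⟩)]
  · have hdown : ∀ d ∈ dirs, -1 ≤ d.2 := by decide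
    have := hdown d hd
    exact (by lia : H ≤ w.2 + d.2)

lemma half_le_tsum_ehitProb_union_lineH {q : ℤ → ℝ≥0∞} (hq : ∑' k, q k ≤ 2⁻¹)
    (hdom : ∀ z ∈ A, H < z.2 →
      ehitProb (lineH H) (0, H) z ≤ hitValue (lineH H) (fun w ↦ q w.1) z) {N : ℤ} (hN : H ≤ N) :
    2⁻¹ ≤ ∑' x : ℤ, ehitProb (A ∪ lineH H) (0, H) (x, N) := by
  refine (ENNReal.add_le_add_iff_right (ENNReal.inv_ne_top.mpr two_ne_zero)).mp ?_
  calc (2⁻¹ : ℝ≥0∞) + 2⁻¹ = ∑' x : ℤ, ehitProb (lineH H) (0, H) (x, N) := by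
        rw [tsum_ehitProb_lineH_line hN, ENNReal.inv_two_add_inv_two]
    _ ≤ ∑' x : ℤ, (ehitProb (A ∪ lineH H) (0, H) (x, N) +
          hitValue (lineH H) (fun w ↦ q w.1) (x, N)) :=
        ENNReal.tsum_le_tsum fun x ↦ hitValue_lineH_le_add_of_dominated hdom hN
    _ = (∑' x : ℤ, ehitProb (A ∪ lineH H) (0, H) (x, N)) + ∑' k, q k := by
        rw [ENNReal.tsum_add, tsum_hitValue_lineH hN]
    _ ≤ (∑' x : ℤ, ehitProb (A ∪ lineH H) (0, H) (x, N)) + 2⁻¹ := by gcongr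

lemma tsum_ehitProb_union_lineH_zero_ne_top (A : Set (ℤ × ℤ)) (h N : ℕ) :
    ∑' x : ℤ, ehitProb (A ∪ lineH 0) (0, h) (x, N) ≠ ∞ := by
  have hpath : 1 ≤ 4 ^ h * ehitProb (lineH 0) (0, 0) (0, h) := by
    simpa using one_le_four_pow_mul_ehitProb (show (0, 0) ∈ lineH 0 from rfl) h
      fun i hi _ ↦ show (0 + i : ℤ) ≠ 0 by lia
  refine ne_top_of_le_ne_top (b := 4 ^ h) (by simp) ?_
  calc ∑' x : ℤ, ehitProb (A ∪ lineH 0) (0, h) (x, N)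
      ≤ ∑' x : ℤ, 4 ^ h * ehitProb (lineH 0) (0, 0) (x, N) :=
        ENNReal.tsum_le_tsum fun x ↦ ehitProb_le_mul_of_subset Set.subset_union_right hpath _
    _ = 4 ^ h := by
        rw [ENNReal.tsum_mul_left, tsum_ehitProb_lineH_line N.cast_nonneg, mul_one]

variable {β : ℝ} {h₀ : ℤ}

lemma exists_dominating_height (hβ0 : 0 < β) (hβ1 : β < 1) (h0 : 0 ≤ h₀)
    (hprofile : ∀ z ∈ A, h₀ < z.2 → (z.2 : ℝ) ≤ |(z.1 : ℝ)| ^ β) :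
    ∃ k : ℕ, ∃ q : ℤ → ℝ≥0∞, ∑' i, q i ≤ 2⁻¹ ∧ ∀ z ∈ A, h₀ + k < z.2 →
      ehitProb (lineH (h₀ + k)) (0, h₀ + k) z ≤
        hitValue (lineH (h₀ + k)) (fun w ↦ q w.1) z := by
  obtain ⟨q, hq, R, hdom⟩ := exists_dominating_density hβ0.le hβ1
  refine ⟨R.toNat, q, hq, fun z hz hlt ↦ ?_⟩
  have hz2 : (z.2 : ℝ) ≤ |(z.1 : ℝ)| ^ β := hprofile z hz (by lia)
  have hz1 : z.1 ≠ 0 := fun h ↦ by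
    rw [h, Int.cast_zero, abs_zero, Real.zero_rpow hβ0.ne', Int.cast_nonpos] at hz2
    lia
  have hone : 1 ≤ |(z.1 : ℝ)| := mod_cast Int.one_le_abs hz1
  have hle : z.2 ≤ |z.1| := by
    exact_mod_cast hz2.trans (Real.rpow_le_self_of_one_le hone hβ1.le)
  have hheight : ((z.2 - (h₀ + R.toNat) : ℤ) : ℝ) ≤ |(z.1 : ℝ)| ^ β :=
    le_trans (mod_cast (by lia)) hz2
  simpa using hdom (h₀ + R.toNat) z.1 (z.2 - (h₀ + R.toNat)) (by lia) (by lia) hheight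

theorem exists_pos_le_harm (hβ0 : 0 < β) (hβ1 : β < 1) (h0 : 0 ≤ h₀) (hmem : (0, h₀) ∈ A)
    (hprofile : ∀ z ∈ A, h₀ < z.2 → (z.2 : ℝ) ≤ |(z.1 : ℝ)| ^ β) :
    ∃ c : ℝ, 0 < c ∧ ∀ᶠ N : ℕ in atTop, c ≤ harm A N (0, h₀) := by
  obtain ⟨k, q, hq, hdom⟩ := exists_dominating_height hβ0 hβ1 h0 hprofile
  have hfree (i : ℕ) (hi : 0 < i) : (0, h₀) + (0, (i : ℤ)) ∉ A ∪ lineH 0 := by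
    rintro (hA | hline)
    · have hle := hprofile _ hA (by simpa using hi)
      rw [Prod.fst_add, add_zero, Int.cast_zero, abs_zero, Real.zero_rpow hβ0.ne',
        Int.cast_nonpos, Prod.snd_add] at hle
      lia
    · exact absurd hline (by lia : h₀ + i ≠ 0)
  have hpath := one_le_four_pow_mul_ehitProb (Set.mem_union_left _ hmem) k
    fun i hi _ ↦ hfree i hi
  refine ⟨(4 ^ k)⁻¹ * 2⁻¹, by positivity, ?_⟩
  filter_upwards [eventually_gt_atTop (h₀ + k).toNat] with N hN
  lift h₀ to ℕ using h0
  have habove : ∀ z ∈ A ∪ lineH 0, (h₀ + k : ℤ) < z.2 → z ∈ A := by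
    rintro z (hA | hline) hlt
    · exact hA
    · exact absurd hline (by lia : z.2 ≠ 0)
  have hhalf : 2⁻¹ ≤ 4 ^ k * ∑' x : ℤ, ehitProb (A ∪ lineH 0) (0, h₀) (x, N) :=
    calc 2⁻¹ ≤ ∑' x : ℤ, ehitProb (A ∪ lineH 0 ∪ lineH (h₀ + k)) (0, h₀ + k) (x, N) :=
          half_le_tsum_ehitProb_union_lineH hq (fun z hz hlt ↦ hdom z (habove z hz hlt) hlt)
            (by lia)
      _ ≤ 4 ^ k * ∑' x : ℤ, ehitProb (A ∪ lineH 0) (0, h₀) (x, N) := by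
          rw [← ENNReal.tsum_mul_left]
          exact ENNReal.tsum_le_tsum fun x ↦
            ehitProb_le_mul_of_subset Set.subset_union_left (by simpa using hpath) _
  rw [harm_eq_toReal_tsum (by lia : (h₀ : ℤ) ≠ N), inv_mul_le_iff₀ (by positivity)]
  have hreal := ENNReal.toReal_mono (ENNReal.mul_ne_top (by simp)
    (tsum_ehitProb_union_lineH_zero_ne_top A h₀ N)) hhalf
  simpa using hreal

end Escape

section Segment

variable {α : ℝ} {B : Set (ℤ × ℤ)} {h₀ : ℤ}

lemma finite_segL (α : ℝ) (h : ℤ) : (segL α h).Finite :=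
  ((Set.finite_Icc (-⌊(h : ℝ) ^ α⌋) ⌊(h : ℝ) ^ α⌋).prod (Set.finite_singleton h)).subset
    fun _ hz ↦ ⟨abs_le.mp hz.1, hz.2⟩

lemma zero_mem_segL (h0 : 0 ≤ h₀) : (0, h₀) ∈ segL α h₀ := by
  have hfloor : 0 ≤ ⌊(h₀ : ℝ) ^ α⌋ :=
    Int.floor_nonneg.mpr (Real.rpow_nonneg (Int.cast_nonneg h0) α)
  exact ⟨by simpa using hfloor, rfl⟩

lemma harm_le_tsum_harm {S : Set (ℤ × ℤ)} (hS : S.Finite) {x : ℤ × ℤ} (hx : x ∈ S)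
    (A : Set (ℤ × ℤ)) (N : ℕ) : harm A N x ≤ ∑' w : ↥S, harm A N w := by
  have : Finite ↥S := hS
  exact (Summable.of_finite (f := fun w : ↥S ↦ harm A N w)).le_tsum ⟨x, hx⟩
    fun w _ ↦ harm_nonneg A N w

lemma height_nonneg (hB : B ⊆ upperH)
    (hmax : (Bhat α B).Nonempty → IsGreatest (Prod.snd '' Bhat α B) h₀)
    (hmin : Bhat α B = ∅ →
      IsLeast {h : ℤ | 0 ≤ h ∧
        (B ∩ {x | |x.1| ≤ ⌈(h : ℝ) ^ α⌉ ∧ 0 ≤ x.2 ∧ x.2 ≤ h}).Nonempty} h₀) :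
    0 ≤ h₀ := by
  rcases (Bhat α B).eq_empty_or_nonempty with hempty | hnonempty
  · exact (hmin hempty).1.1
  · obtain ⟨z, hz, rfl⟩ := (hmax hnonempty).1
    exact hB hz.1

theorem harm_segment_ge_general (α : ℝ) (hα : 1 < α) (B : Set (ℤ × ℤ)) (h₀ : ℤ) (h0 : 0 ≤ h₀)
    (hBhat : ∀ z ∈ Bhat α B, z.2 ≤ h₀) :
    ∃ c : ℝ, 0 < c ∧ ∀ᶠ N : ℕ in atTop,
      c ≤ ∑' w : ↥(segL α h₀), harm (B ∪ segL α h₀) N (w : ℤ × ℤ) := by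
  have hprofile : ∀ z ∈ B ∪ segL α h₀, h₀ < z.2 → (z.2 : ℝ) ≤ |(z.1 : ℝ)| ^ (1 / α) := by
    rintro z (hz | hz) hlt
    · by_contra hhigh
      exact hlt.not_ge (hBhat z ⟨hz, fun hlow ↦ hhigh hlow.2⟩)
    · exact absurd hz.2 hlt.ne'
  have hα0 : 0 < α := by linarith
  obtain ⟨c, hc, hharm⟩ := exists_pos_le_harm (one_div_pos.mpr hα0) ((div_lt_one hα0).mpr hα) h0
    (.inr (zero_mem_segL h0)) hprofile
  refine ⟨c, hc, hharm.mono fun N hN ↦ hN.trans ?_⟩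
  exact harm_le_tsum_harm (finite_segL α h₀) (zero_mem_segL h0) _ N

end Segment

/-- **Lemma 1.** Let `α > 1` with `α ∉ ℚ ∪ ℚ₂`, let `B ⊂ ℍ` be nonempty with
`B̂ = B \ {x ∈ ℍ : x₂ ≤ |x₁|^{1/α}}` finite, and let `h₀ = max_{x ∈ B̂} x₂` if
`B̂ ≠ ∅`, while `h₀ = min {h ≥ 0 : B ∩ ([−⌈h^α⌉,⌈h^α⌉] × [0,h]) ≠ ∅}` if `B̂ = ∅`.
Then there is a constant `c > 0` such that for all sufficiently large `N`,
`H_{B ∪ l_{h₀}, N}(l_{h₀}) = Σ_{w ∈ l_{h₀}} H_{B ∪ l_{h₀}, N}(w) ≥ c`. -/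
theorem harm_segment_ge (α : ℝ) (hα : 1 < α) (hirr : Irrational α) (hQ2 : α ∉ Q2)
    (B : Set (ℤ × ℤ)) (hB : B ⊆ upperH) (hne : B.Nonempty)
    (hfin : (Bhat α B).Finite)
    (h₀ : ℤ)
    (hmax : (Bhat α B).Nonempty → IsGreatest (Prod.snd '' Bhat α B) h₀)
    (hmin : Bhat α B = ∅ →
      IsLeast {h : ℤ | 0 ≤ h ∧
        (B ∩ {x | |x.1| ≤ ⌈(h : ℝ) ^ α⌉ ∧ 0 ≤ x.2 ∧ x.2 ≤ h}).Nonempty} h₀) :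
    ∃ c : ℝ, 0 < c ∧ ∀ᶠ N : ℕ in atTop,
      c ≤ ∑' w : ↥(segL α h₀), harm (B ∪ segL α h₀) N (w : ℤ × ℤ) := by
  exact harm_segment_ge_general α hα B h₀ (height_nonneg hB hmax hmin)
    fun z hz ↦ (hmax ⟨z, hz⟩).2 ⟨z, hz, rfl⟩

end SHM
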